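/- ∫₀^∞ I₀(t)[K₀(t)]⁵·t·(2 − 85t² + 72t⁴) dt = 0. -/

import Mathlib

open Real MeasureTheory Set

/-- Modified Bessel function `I₀(t) = (1/π)∫₀^π exp(t cos θ) dθ`. -/
noncomputable def I0 (t : ℝ) : ℝ := (1 / π) * ∫ θ in (0:ℝ)..π, exp (t * cos θ)

/-- Modified Bessel function `K₀(t) = ∫₀^∞ exp(−t cosh u) du`. -/
noncomputable def K0 (t : ℝ) : ℝ := ∫ u in Ioi (0:ℝ), exp (-(t * Real.cosh u))

/-- Rising factorial `(a)ₙ = a(a+1)⋯(a+n−1)`. -/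
noncomputable def ris (a : ℝ) (n : ℕ) : ℝ := ∏ k ∈ Finset.range n, (a + k)

/-- Generalized hypergeometric series `ₚF_q(a; b | x)`. -/
noncomputable def pFq (a b : List ℝ) (x : ℝ) : ℝ :=
  ∑' n : ℕ, ((a.map fun p => ris p n).prod / (b.map fun q => ris q n).prod) * x ^ n
    / (n.factorial : ℝ)

open Filter Topology

/-- Moments of the integrand of `I₀`. -/
noncomputable def JJ (k : ℕ) (t : ℝ) : ℝ :=
  (1 / π) * ∫ θ in (0:ℝ)..π, cos θ ^ k * exp (t * cos θ)

/-- Moments of the integrand of `K₀`. -/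
noncomputable def KK (k : ℕ) (t : ℝ) : ℝ :=
  ∫ u in Ioi (0:ℝ), Real.cosh u ^ k * exp (-(t * Real.cosh u))

lemma I0_eq : I0 = JJ 0 := by
  funext t; simp [I0, JJ]

lemma K0_eq : K0 = KK 0 := by
  funext t; simp [K0, KK]

lemma JJ_deriv (k : ℕ) (t : ℝ) : HasDerivAt (JJ k) (JJ (k+1) t) t := by
  unfold JJ
  apply HasDerivAt.const_mul
  have := intervalIntegral.hasDerivAt_integral_of_dominated_loc_of_deriv_le
    (μ := volume) (a := 0) (b := π) (x₀ := t) (s := Metric.ball t 1)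
    (F := fun t θ => cos θ ^ k * exp (t * cos θ))
    (F' := fun t θ => cos θ ^ (k+1) * exp (t * cos θ))
    (bound := fun _ => exp (|t| + 1))
    (Metric.ball_mem_nhds t one_pos)
    (Eventually.of_forall fun x => by
      apply Continuous.aestronglyMeasurable; fun_prop)
    (by apply Continuous.intervalIntegrable; fun_prop)
    (by apply Continuous.aestronglyMeasurable; fun_prop)
    (Eventually.of_forall fun θ _ x hx => by
      rw [norm_mul, norm_pow, Real.norm_eq_abs, Real.norm_eq_abs, abs_exp]
      have h1 : |cos θ| ^ (k+1) ≤ 1 := pow_le_one₀ (abs_nonneg _) (abs_cos_le_one θ)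
      have h2 : x * cos θ ≤ |t| + 1 := by
        have h3 : |x| ≤ |t| + 1 := by
          rw [Metric.mem_ball, Real.dist_eq] at hx
          have := abs_sub_abs_le_abs_sub x t
          linarith
        calc x * cos θ ≤ |x * cos θ| := le_abs_self _
          _ = |x| * |cos θ| := abs_mul _ _
          _ ≤ |x| * 1 := by gcongr; exact abs_cos_le_one θ
          _ ≤ _ := by linarith
      calc _ ≤ 1 * exp (x * cos θ) := by gcongr
        _ ≤ _ := by rw [one_mul]; gcongr)
    (by simp)
    (Eventually.of_forall fun θ _ x _ => by
      have h := (((hasDerivAt_id x).mul_const (cos θ)).exp).const_mul (cos θ ^ k)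
      refine h.congr_deriv ?_
      simp only [id]; ring)
  exact this.2

lemma JJ_rec (t : ℝ) : JJ 1 t = t * (JJ 0 t - JJ 2 t) := by
  have h : ∫ θ in (0:ℝ)..π, (cos θ ^ 1 * exp (t * cos θ) -
      t * (cos θ ^ 0 * exp (t * cos θ) - cos θ ^ 2 * exp (t * cos θ))) = 0 := by
    rw [intervalIntegral.integral_eq_sub_of_hasDerivAt (f := fun θ => sin θ * exp (t * cos θ))]
    · simp
    · intro x _
      have := (Real.hasDerivAt_sin x).mul (((Real.hasDerivAt_cos x).const_mul t).exp)
      refine this.congr_deriv ?_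
      have := Real.sin_sq x
      linear_combination (-t * exp (t * cos x)) * this
    · apply Continuous.intervalIntegrable; fun_prop
  have i (k : ℕ) : IntervalIntegrable (fun θ => cos θ ^ k * exp (t * cos θ)) volume 0 π := by
    apply Continuous.intervalIntegrable; fun_prop
  rw [intervalIntegral.integral_sub (i 1) (((i 0).sub (i 2)).const_mul t),
    intervalIntegral.integral_const_mul, intervalIntegral.integral_sub (i 0) (i 2)] at h
  unfold JJ
  linear_combination (1 / π) * h

lemma JJ_bound (k : ℕ) {t : ℝ} (ht : 0 < t) : |JJ k t| ≤ exp t := by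
  unfold JJ
  rw [abs_mul, abs_of_pos (by positivity : 0 < 1 / π)]
  have : ‖∫ θ in (0:ℝ)..π, cos θ ^ k * exp (t * cos θ)‖ ≤ exp t * |π - 0| := by
    apply intervalIntegral.norm_integral_le_of_norm_le_const
    intro θ _
    rw [norm_mul, norm_pow, Real.norm_eq_abs, Real.norm_eq_abs, abs_exp]
    have h1 : |cos θ| ^ k ≤ 1 := pow_le_one₀ (abs_nonneg _) (abs_cos_le_one θ)
    have h2 : t * cos θ ≤ t := by nlinarith [cos_le_one θ]
    calc _ ≤ 1 * exp (t * cos θ) := by gcongr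
      _ ≤ _ := by rw [one_mul]; gcongr
  rw [sub_zero, abs_of_pos pi_pos, Real.norm_eq_abs] at this
  calc _ ≤ 1 / π * (exp t * π) := by gcongr
    _ = _ := by field_simp

lemma cosh_lower (u : ℝ) : exp u / 2 ≤ Real.cosh u := by
  rw [Real.cosh_eq]; linarith [exp_pos (-u)]

lemma KK_int (k : ℕ) {t : ℝ} (ht : 0 < t) :
    IntegrableOn (fun u => Real.cosh u ^ k * exp (-(t * Real.cosh u))) (Ioi 0) := by
  have hb : IntegrableOn (fun u : ℝ => ((k+1).factorial / t ^ (k+1) * 2) * exp (-1 * u)) (Ioi 0) :=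
    (exp_neg_integrableOn_Ioi 0 one_pos).const_mul _
  refine hb.mono' (by apply Continuous.aestronglyMeasurable; fun_prop) (Eventually.of_forall ?_)
  intro u
  have hc := Real.cosh_pos u
  rw [Real.norm_of_nonneg (by positivity)]
  have h1 := Real.pow_div_factorial_le_exp (x := t * Real.cosh u) (by positivity) (k+1)
  have h2 := cosh_lower u
  have hf : (0:ℝ) < (k+1).factorial := by positivity
  rw [div_le_iff₀ hf] at h1
  have h3 : (1:ℝ) ≤ 2 * exp (-1 * u) * Real.cosh u := by
    have : exp (-1 * u) * exp u = 1 := by rw [← exp_add]; simp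
    nlinarith [exp_pos (-1 * u)]
  rw [exp_neg, ← div_eq_mul_inv, div_le_iff₀ (exp_pos _)]
  have h4 : Real.cosh u ^ k * t ^ (k+1) ≤ 2 * exp (-1*u) * (exp (t * Real.cosh u) * (k+1).factorial) := by
    calc _ = Real.cosh u ^ k * t ^ (k+1) * 1 := by ring
      _ ≤ Real.cosh u ^ k * t ^ (k+1) * (2 * exp (-1 * u) * Real.cosh u) := by gcongr
      _ = 2 * exp (-1*u) * (t * Real.cosh u) ^ (k+1) := by ring
      _ ≤ _ := by gcongr
  have ht' : 0 < t ^ (k+1) := by positivity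
  calc _ ≤ (2 * exp (-1*u) * (exp (t * Real.cosh u) * (k+1).factorial)) / t ^ (k+1) := by
        rw [le_div_iff₀ ht']; exact h4
    _ = _ := by ring

lemma KK_deriv (k : ℕ) {t : ℝ} (ht : 0 < t) : HasDerivAt (KK k) (-KK (k+1) t) t := by
  unfold KK
  rw [← integral_neg]
  have := hasDerivAt_integral_of_dominated_loc_of_deriv_le
    (μ := volume.restrict (Ioi (0:ℝ))) (x₀ := t) (s := Ioi (t/2))
    (F := fun t u => Real.cosh u ^ k * exp (-(t * Real.cosh u)))
    (F' := fun t u => -(Real.cosh u ^ (k+1) * exp (-(t * Real.cosh u))))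
    (bound := fun u => Real.cosh u ^ (k+1) * exp (-(t/2 * Real.cosh u)))
    (Ioi_mem_nhds (by linarith))
    (Eventually.of_forall fun x => by
      apply Continuous.aestronglyMeasurable; fun_prop)
    (KK_int k ht)
    (by apply Continuous.aestronglyMeasurable; fun_prop)
    (Eventually.of_forall fun u x hx => by
      have hc := Real.cosh_pos u
      have hx : t/2 < x := hx
      rw [norm_neg, Real.norm_of_nonneg (by positivity)]
      gcongr)
    (KK_int (k+1) (by linarith))
    (Eventually.of_forall fun u x _ => by
      have h := ((((hasDerivAt_id x).mul_const (Real.cosh u)).neg).exp).const_mul (Real.cosh u ^ k)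
      refine h.congr_deriv ?_
      simp only [id, Pi.neg_apply]; ring)
  exact this.2

lemma KK_rec {t : ℝ} (ht : 0 < t) : KK 1 t = t * (KK 2 t - KK 0 t) := by
  have i (k : ℕ) := KK_int k ht
  have hd : ∀ u ∈ Ici (0:ℝ), HasDerivAt (fun u => Real.sinh u * exp (-(t * Real.cosh u)))
      (Real.cosh u ^ 1 * exp (-(t * Real.cosh u)) -
      t * (Real.cosh u ^ 2 * exp (-(t * Real.cosh u)) - Real.cosh u ^ 0 * exp (-(t * Real.cosh u)))) u := by
    intro x _
    have := (Real.hasDerivAt_sinh x).mul ((((Real.hasDerivAt_cosh x).const_mul t).neg).exp)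
    refine this.congr_deriv ?_
    have := Real.sinh_sq x
    simp only [Pi.neg_apply]
    linear_combination (-t * exp (-(t * Real.cosh x))) * this
  have hi := (i 1).sub (((i 2).sub (i 0)).const_mul t)
  have hs : IntegrableOn (fun u => Real.sinh u * exp (-(t * Real.cosh u))) (Ioi 0) := by
    refine (i 1).mono' (by apply Continuous.aestronglyMeasurable; fun_prop) (Eventually.of_forall ?_)
    intro u
    rw [norm_mul, Real.norm_eq_abs, Real.norm_eq_abs, abs_exp, pow_one]
    gcongr
    rw [abs_le]
    constructor
    · rw [Real.sinh_eq, Real.cosh_eq]; linarith [exp_pos u]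
    · exact (Real.sinh_lt_cosh u).le
  have h0 := tendsto_zero_of_hasDerivAt_of_integrableOn_Ioi (fun x hx => hd x (Ioi_subset_Ici_self hx)) hi hs
  have h := integral_Ioi_of_hasDerivAt_of_tendsto' hd hi h0
  have e1 := integral_sub (i 1) (((i 2).sub (i 0)).const_mul t)
  have e2 := integral_sub (i 2) (i 0)
  have e3 := integral_const_mul (μ := volume.restrict (Ioi (0:ℝ))) t (fun u => (Real.cosh u ^ 2 * exp (-(t * Real.cosh u)) - Real.cosh u ^ 0 * exp (-(t * Real.cosh u))))
  simp only [Pi.sub_apply] at e1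
  rw [e1, e3, e2] at h
  simp only [Real.sinh_zero, zero_mul, sub_zero] at h
  unfold KK
  linear_combination h

/-- the bounding function -/
noncomputable def BB (t : ℝ) : ℝ := t ^ (-(1/8):ℝ) * exp (-(t/2))

lemma pt_bound {x : ℝ} (hx : 0 < x) (k : ℕ) (hk : k ≤ 1) :
    x ^ k * exp (-x) ≤ 8 * (x ^ (-(1/8):ℝ) * exp (-(x/2))) := by
  have e : exp (-x) = exp (-(x/2)) * exp (-(x/2)) := by rw [← exp_add]; congr 1; ring
  have h1 : x ^ (1/8:ℝ) ≤ 1 + x := by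
    calc x ^ (1/8:ℝ) ≤ (1 + x) ^ (1/8:ℝ) := by gcongr; linarith
      _ ≤ (1+x) ^ (1:ℝ) := Real.rpow_le_rpow_of_exponent_le (by linarith) (by norm_num)
      _ = _ := Real.rpow_one _
  have h2 : x ^ k * (1 + x) ≤ 8 * exp (x/2) := by
    have := Real.quadratic_le_exp_of_nonneg (x := x/2) (by linarith)
    interval_cases k
    · nlinarith
    · nlinarith
  have h3 : x ^ k * x ^ (1/8:ℝ) ≤ 8 * exp (x/2) :=
    le_trans (by gcongr) h2
  have hp : 0 < x ^ (1/8:ℝ) := by positivity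
  rw [Real.rpow_neg hx.le, e]
  have h4 : exp (x/2) * exp (-(x/2)) = 1 := by rw [← exp_add]; simp
  calc _ = (x ^ k * x ^ (1/8:ℝ)) * exp (-(x/2)) * ((x ^ (1/8:ℝ))⁻¹ * exp (-(x/2))) := by
        field_simp
    _ ≤ (8 * exp (x/2)) * exp (-(x/2)) * ((x ^ (1/8:ℝ))⁻¹ * exp (-(x/2))) := by gcongr
    _ = _ := by rw [mul_assoc 8, h4]; ring

lemma KK_bound (k : ℕ) (hk : k ≤ 1) {t : ℝ} (ht : 0 < t) :
    |t ^ k * KK k t| ≤ (∫ u in Ioi (0:ℝ), 16 * exp (-(1/8) * u)) * BB t := by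
  unfold KK
  rw [← integral_const_mul, ← integral_mul_const, ← Real.norm_eq_abs]
  apply norm_integral_le_of_norm_le
  · exact ((exp_neg_integrableOn_Ioi 0 (by norm_num : (0:ℝ) < 1/8)).const_mul 16).mul_const _
  refine Eventually.of_forall fun u => ?_
  have hc := Real.cosh_pos u
  have hx : 0 < t * Real.cosh u := by positivity
  rw [Real.norm_of_nonneg (by positivity), ← mul_assoc, ← mul_pow]
  refine (pt_bound hx k hk).trans ?_
  have h1 : exp (-(t * Real.cosh u / 2)) ≤ exp (-(t/2)) := by
    have := Real.one_le_cosh u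
    gcongr; nlinarith
  have h2 : Real.cosh u ^ (-(1/8):ℝ) ≤ 2 * exp (-(1/8) * u) := by
    calc Real.cosh u ^ (-(1/8):ℝ) ≤ (exp u / 2) ^ (-(1/8):ℝ) :=
          Real.rpow_le_rpow_of_nonpos (by positivity) (cosh_lower u) (by norm_num)
      _ = 2 ^ (1/8:ℝ) * exp (-(1/8) * u) := by
          rw [Real.div_rpow (exp_pos u).le (by norm_num), ← Real.exp_mul,
            Real.rpow_neg (by norm_num : (0:ℝ) ≤ 2), div_inv_eq_mul, mul_comm u, mul_comm]
      _ ≤ _ := by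
          gcongr
          calc (2:ℝ) ^ (1/8:ℝ) ≤ 2 ^ (1:ℝ) := Real.rpow_le_rpow_of_exponent_le (by norm_num) (by norm_num)
            _ = 2 := Real.rpow_one _
  rw [Real.mul_rpow ht.le hc.le]
  unfold BB
  calc _ ≤ 8 * (t ^ (-(1/8):ℝ) * (2 * exp (-(1/8) * u)) * exp (-(t/2))) := by gcongr
    _ = _ := by ring

/-- envelope -/
noncomputable def EE (t : ℝ) : ℝ := t ^ (-(5/8):ℝ) * exp (-(3/2) * t)

lemma EE_eq {t : ℝ} (ht : 0 < t) : exp t * BB t ^ 5 = EE t := by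
  unfold BB EE
  rw [mul_pow, ← Real.rpow_natCast, ← Real.rpow_mul ht.le, ← Real.exp_nat_mul, mul_left_comm,
    ← exp_add]
  congr 2
  · norm_num
  · push_cast; ring

lemma mono_bound : ∃ M : ℝ, ∀ (m j k : ℕ), j + k = 5 → ∀ t : ℝ, 0 < t →
    |JJ m t * (KK 0 t ^ j * (-(t * KK 1 t)) ^ k)| ≤ M * EE t := by
  set M := ∫ u in Ioi (0:ℝ), 16 * exp (-(1/8) * u)
  refine ⟨M ^ 5, fun m j k hjk t ht => ?_⟩
  have h0 := KK_bound 0 (by norm_num) ht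
  have h1 := KK_bound 1 (by norm_num) ht
  rw [pow_zero, one_mul] at h0
  rw [pow_one] at h1
  have hM := (abs_nonneg _).trans h0
  have hJ := JJ_bound m ht
  rw [abs_mul, abs_mul, abs_pow, abs_pow, abs_neg, ← EE_eq ht]
  calc _ ≤ exp t * ((M * BB t) ^ j * (M * BB t) ^ k) := by
        gcongr
    _ = _ := by rw [← pow_add, hjk]; ring

lemma EE_int (n : ℕ) : IntegrableOn (fun t => t ^ n * EE t) (Ioi 0) := by
  have := integrableOn_rpow_mul_exp_neg_mul_rpow (p := 1) (s := n - 5/8) (b := 3/2)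
    (by have : (0:ℝ) ≤ n := n.cast_nonneg
        linarith) one_pos (by norm_num)
  refine this.congr_fun ?_ measurableSet_Ioi
  intro t ht
  have ht : 0 < t := ht
  simp only [EE]
  rw [Real.rpow_one, ← mul_assoc, ← Real.rpow_natCast, ← Real.rpow_add ht]
  congr 2

lemma EE_zero (n : ℕ) (hn : 1 ≤ n) : Tendsto (fun t => t ^ n * EE t) (𝓝[>] 0) (𝓝 0) := by
  have h : Tendsto (fun t : ℝ => t ^ ((n:ℝ) - 5/8) * exp (-(3/2) * t)) (𝓝[>] 0) (𝓝 0) := by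
    have hn' : (1:ℝ) ≤ n := by exact_mod_cast hn
    have : ContinuousAt (fun t : ℝ => t ^ ((n:ℝ) - 5/8) * exp (-(3/2) * t)) 0 := by
      apply ContinuousAt.mul
      · exact Real.continuousAt_rpow_const _ _ (Or.inr (by linarith))
      · fun_prop
    have := this.tendsto
    rw [Real.zero_rpow (by linarith), zero_mul] at this
    exact this.mono_left nhdsWithin_le_nhds
  refine h.congr' ?_
  filter_upwards [self_mem_nhdsWithin] with t ht
  have ht : 0 < t := ht
  simp only [EE]
  rw [← mul_assoc, ← Real.rpow_natCast, ← Real.rpow_add ht]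
  congr 2

lemma EE_top (n : ℕ) : Tendsto (fun t => t ^ n * EE t) atTop (𝓝 0) := by
  have h := tendsto_rpow_mul_exp_neg_mul_atTop_nhds_zero ((n:ℝ) - 5/8) (3/2) (by norm_num)
  refine h.congr' ?_
  filter_upwards [eventually_gt_atTop 0] with t ht
  simp only [EE]
  rw [← mul_assoc, ← Real.rpow_natCast, ← Real.rpow_add ht]
  congr 2

lemma mono_tendsto (l : Filter ℝ) (hl : ∀ᶠ t in l, 0 < t)
    (hE : ∀ n : ℕ, 1 ≤ n → Tendsto (fun t => t ^ n * EE t) l (𝓝 0))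
    (n m j k : ℕ) (hn : 1 ≤ n) (hjk : j + k = 5) (C : ℝ) :
    Tendsto (fun t => C * (t ^ n * (JJ m t * (KK 0 t ^ j * (-(t * KK 1 t)) ^ k)))) l (𝓝 0) := by
  obtain ⟨M, hM⟩ := mono_bound
  have h := (hE n hn).const_mul M
  rw [mul_zero] at h
  have h2 : Tendsto (fun t => t ^ n * (JJ m t * (KK 0 t ^ j * (-(t * KK 1 t)) ^ k))) l (𝓝 0) := by
    refine squeeze_zero_norm' ?_ h
    filter_upwards [hl] with t ht
    rw [norm_mul, Real.norm_eq_abs, Real.norm_eq_abs, abs_of_pos (by positivity : 0 < t ^ n)]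
    have := hM m j k hjk t ht
    calc _ ≤ t ^ n * (M * EE t) := by gcongr
      _ = _ := by ring
  simpa using h2.const_mul C

/-- the antiderivative as a polynomial -/
def PP (t a b c d : ℝ) : ℝ :=
  720 * (b * d^5) - 6 * t^2 * (240 * b * c^2 * d^3 + 120 * a * c * d^4)
  + 12 * t^2 * (60 * b * c^3 * d^2 + 60 * a * c^2 * d^3)
  + (-24 * t^2 + 72 * t^4) * (10 * b * c^4 * d + 20 * a * c^3 * d^2)
  + (48 * t^2 - 432 * t^4) * (b * c^5 + 5 * a * c^4 * d)
  + (-96 * t^2 + 1968 * t^4 - 720 * t^6) * (a * c^5)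

/-- the antiderivative -/
noncomputable def GG (t : ℝ) : ℝ := PP t (JJ 0 t) (t * JJ 1 t) (KK 0 t) (-(t * KK 1 t))

lemma GG_tendsto (l : Filter ℝ) (hl : ∀ᶠ t in l, 0 < t)
    (hE : ∀ n : ℕ, 1 ≤ n → Tendsto (fun t => t ^ n * EE t) l (𝓝 0)) :
    Tendsto GG l (𝓝 0) := by
  have T := mono_tendsto l hl hE
  have b1 := T 1 1 0 5 (by norm_num) (by norm_num) 720
  have b2 := T 3 1 2 3 (by norm_num) (by norm_num) (-6*240)
  have b3 := T 2 0 1 4 (by norm_num) (by norm_num) (-6*120)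
  have b4 := T 3 1 3 2 (by norm_num) (by norm_num) (12*60)
  have b5 := T 2 0 2 3 (by norm_num) (by norm_num) (12*60)
  have b6 := T 3 1 4 1 (by norm_num) (by norm_num) (-24*10)
  have b7 := T 5 1 4 1 (by norm_num) (by norm_num) (72*10)
  have b8 := T 2 0 3 2 (by norm_num) (by norm_num) (-24*20)
  have b9 := T 4 0 3 2 (by norm_num) (by norm_num) (72*20)
  have c1 := T 3 1 5 0 (by norm_num) (by norm_num) 48
  have c2 := T 5 1 5 0 (by norm_num) (by norm_num) (-432)
  have c3 := T 2 0 4 1 (by norm_num) (by norm_num) (48*5)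
  have c4 := T 4 0 4 1 (by norm_num) (by norm_num) (-432*5)
  have c5 := T 2 0 5 0 (by norm_num) (by norm_num) (-96)
  have c6 := T 4 0 5 0 (by norm_num) (by norm_num) 1968
  have c7 := T 6 0 5 0 (by norm_num) (by norm_num) (-720)
  have S := ((((b1.add b2).add b3).add b4).add b5).add ((((b6.add b7).add b8).add b9).add
    ((((((c1.add c2).add c3).add c4).add c5).add c6).add c7))
  simp only [add_zero] at S
  refine S.congr fun t => ?_
  unfold GG PP
  ring

lemma GG_deriv {t : ℝ} (ht : 0 < t) :
    HasDerivAt GG (-96 * (I0 t * (K0 t)^5 * t * (2 - 85*t^2 + 72*t^4))) t := by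
  rw [I0_eq, K0_eq]
  have ha := JJ_deriv 0 t
  have hb : HasDerivAt (fun t => t * JJ 1 t) (t * JJ 0 t) t := by
    refine ((hasDerivAt_id t).mul (JJ_deriv 1 t)).congr_deriv ?_
    simp only [id]
    linear_combination JJ_rec t
  have hc := KK_deriv 0 ht
  have hd : HasDerivAt (fun t => -(t * KK 1 t)) (t * KK 0 t) t := by
    refine (((hasDerivAt_id t).mul (KK_deriv 1 ht)).neg).congr_deriv ?_
    simp only [id]
    linear_combination - KK_rec ht
  have hid := hasDerivAt_id' t
  unfold GG PP
  have D1 := (hb.mul (hd.pow 5)).const_mul 720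
  have D2 := ((hid.pow 2).const_mul 6).mul ((((hb.const_mul 240).mul (hc.pow 2)).mul (hd.pow 3)).add
    (((ha.const_mul 120).mul hc).mul (hd.pow 4)))
  have D3 := ((hid.pow 2).const_mul 12).mul ((((hb.const_mul 60).mul (hc.pow 3)).mul (hd.pow 2)).add
    (((ha.const_mul 60).mul (hc.pow 2)).mul (hd.pow 3)))
  have D4 := (((hid.pow 2).const_mul (-24)).add ((hid.pow 4).const_mul 72)).mul
    ((((hb.const_mul 10).mul (hc.pow 4)).mul hd).add
    (((ha.const_mul 20).mul (hc.pow 3)).mul (hd.pow 2)))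
  have D5 := (((hid.pow 2).const_mul 48).sub ((hid.pow 4).const_mul 432)).mul
    ((hb.mul (hc.pow 5)).add (((ha.const_mul 5).mul (hc.pow 4)).mul hd))
  have D6 := ((((hid.pow 2).const_mul (-96)).add ((hid.pow 4).const_mul 1968)).sub
    ((hid.pow 6).const_mul 720)).mul (ha.mul (hc.pow 5))
  have D := ((((D1.sub D2).add D3).add D4).add D5).add D6
  refine D.congr_deriv ?_
  simp only [Pi.mul_apply, Pi.add_apply, Pi.sub_apply, Pi.pow_apply, zero_add, Nat.cast_ofNat,
    Nat.reduceSub]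
  ring

lemma main_int : IntegrableOn (fun t => -96 * (I0 t * (K0 t)^5 * t * (2 - 85*t^2 + 72*t^4)))
    (Ioi 0) := by
  obtain ⟨M, hM⟩ := mono_bound
  have hb : IntegrableOn (fun t => (96 * M) * (2 * (t ^ 1 * EE t) + 85 * (t ^ 3 * EE t)
      + 72 * (t ^ 5 * EE t))) (Ioi 0) :=
    ((((EE_int 1).const_mul 2).add ((EE_int 3).const_mul 85)).add
      ((EE_int 5).const_mul 72)).const_mul _
  refine hb.mono' ?_ ?_
  · apply ContinuousOn.aestronglyMeasurable _ measurableSet_Ioi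
    have h1 : ContinuousOn I0 (Ioi 0) := fun t _ => by
      rw [I0_eq]; exact (JJ_deriv 0 t).continuousAt.continuousWithinAt
    have h2 : ContinuousOn K0 (Ioi 0) := fun t ht => by
      rw [K0_eq]; exact (KK_deriv 0 ht).continuousAt.continuousWithinAt
    fun_prop
  · refine (ae_restrict_mem measurableSet_Ioi).mono fun t ht => ?_
    have ht : 0 < t := ht
    have h := hM 0 5 0 rfl t ht
    rw [pow_zero, mul_one] at h
    rw [I0_eq, K0_eq]
    have h5 : |2 - 85*t^2 + 72*t^4| ≤ 2 + 85*t^2 + 72*t^4 := by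
      rw [abs_le]
      constructor <;> nlinarith [sq_nonneg t, sq_nonneg (t^2)]
    have hM0 := (abs_nonneg _).trans h
    rw [Real.norm_eq_abs, abs_mul, abs_mul, abs_mul, abs_of_pos ht]
    calc _ ≤ |(-96:ℝ)| * (M * EE t * t * (2 + 85*t^2 + 72*t^4)) := by gcongr
      _ = _ := by rw [abs_of_neg (by norm_num)]; ring

theorem sum_rule_IKM15 :
    (∫ t in Ioi (0:ℝ), I0 t * (K0 t)^5 * t * (2 - 85*t^2 + 72*t^4)) = 0 := by
  have h0 : GG 0 = 0 := by simp [GG, PP]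
  have hcont : ContinuousWithinAt GG (Ici 0) 0 := by
    rw [← continuousWithinAt_Ioi_iff_Ici, ContinuousWithinAt, h0]
    exact GG_tendsto _ self_mem_nhdsWithin EE_zero
  have h := integral_Ioi_of_hasDerivAt_of_tendsto hcont (fun t ht => GG_deriv ht) main_int
    (GG_tendsto _ (eventually_gt_atTop 0) fun n _ => EE_top n)
  rw [integral_const_mul, h0] at h
  linarith
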